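/- arXiv:1702.04228 — 2 statements merged into one kernel-verified Lean document; each statement's English description precedes it below -/
import Mathlib

section
/- Annealed terms with disconnected bubbles are suppressed (key step of quenched = annealed at leading order): for D ≥ 2 and any (D+1)-tuple σ of permutations of {1,…,k} such that the whole (D+1)-colored graph is connected, C(σ) = 1, but the D-bubble is disconnected, C_D(σ_D) ≥ 2, the N-exponent satisfies −(D−1)·k + F(σ) − F_D(σ_D) ≤ 2 − D; that is, such terms are suppressed by at least N^{−(D−1)} relative to the leading scaling N. -/
/-- Number of cycles of a permutation counting fixed points: the number of orbits
on `Fin k` of the cyclic group generated by `τ`. -/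
noncomputable def cycleCount {k : ℕ} (τ : Equiv.Perm (Fin k)) : ℕ :=
  Nat.card (MulAction.orbitRel.Quotient (Subgroup.zpowers τ) (Fin k))

/-- Total number of faces of the `(D+1)`-colored graph encoded by `σ`:
`F(σ) = Σ_{c₁ < c₂} c(σ⁽ᶜ¹⁾ ∘ (σ⁽ᶜ²⁾)⁻¹)`. -/
noncomputable def faceCount {k D : ℕ} (σ : Fin (D + 1) → Equiv.Perm (Fin k)) : ℕ :=
  ∑ p ∈ Finset.univ.filter (fun p : Fin (D + 1) × Fin (D + 1) => p.1 < p.2),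
    cycleCount (σ p.1 * (σ p.2)⁻¹)

/-- Number of connected components of the `(D+1)`-colored graph encoded by `σ`:
the number of orbits on `Fin k` of the subgroup generated by `(σ⁽⁰⁾)⁻¹ ∘ σ⁽ᶜ⁾`, `1 ≤ c ≤ D`. -/
noncomputable def compCount {k D : ℕ} (σ : Fin (D + 1) → Equiv.Perm (Fin k)) : ℕ :=
  Nat.card (MulAction.orbitRel.Quotient
    (Subgroup.closure
      {g : Equiv.Perm (Fin k) | ∃ c : Fin (D + 1), c ≠ 0 ∧ g = (σ 0)⁻¹ * σ c}) (Fin k))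

/-- Number of faces of the `D`-bubble (colors `1,…,D`) of `σ`:
`F_D(σ_D) = Σ_{1 ≤ c₁ < c₂ ≤ D} c(σ⁽ᶜ¹⁾ ∘ (σ⁽ᶜ²⁾)⁻¹)`. -/
noncomputable def bubbleFaceCount {k D : ℕ} (σ : Fin (D + 1) → Equiv.Perm (Fin k)) : ℕ :=
  ∑ p ∈ Finset.univ.filter
      (fun p : Fin (D + 1) × Fin (D + 1) => 0 < p.1 ∧ p.1 < p.2),
    cycleCount (σ p.1 * (σ p.2)⁻¹)

/-- Number of connected components of the `D`-bubble of `σ`: the number of orbits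
on `Fin k` of the subgroup generated by `(σ⁽¹⁾)⁻¹ ∘ σ⁽ᶜ⁾`, `2 ≤ c ≤ D`. -/
noncomputable def bubbleCompCount {k D : ℕ} (σ : Fin (D + 1) → Equiv.Perm (Fin k)) : ℕ :=
  Nat.card (MulAction.orbitRel.Quotient
    (Subgroup.closure
      {g : Equiv.Perm (Fin k) | ∃ c : Fin (D + 1), 1 < c ∧ g = (σ 1)⁻¹ * σ c}) (Fin k))

open Module

/-- The space of rational functions on `Fin k` that are invariant under `g`. -/
def invariants {k : ℕ} (g : Equiv.Perm (Fin k)) : Submodule ℚ (Fin k → ℚ) :=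
  LinearMap.ker (LinearMap.funLeft ℚ ℚ g - LinearMap.id)

lemma mem_invariants {k : ℕ} {g : Equiv.Perm (Fin k)} {f : Fin k → ℚ} :
    f ∈ invariants g ↔ ∀ i, f (g i) = f i := by
  simp [invariants, sub_eq_zero, funext_iff, LinearMap.funLeft_apply]

/-- The stabilizer of a function, as a subgroup of permutations. -/
def stabilizerOf {k : ℕ} (f : Fin k → ℚ) : Subgroup (Equiv.Perm (Fin k)) where
  carrier := {g | ∀ i, f (g i) = f i}
  mul_mem' ha hb i := (ha _).trans (hb i)
  one_mem' _ := rfl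
  inv_mem' {g} hg i := by simpa using (hg (g⁻¹ i)).symm

/-- The dimension of the space of functions invariant under a generating set of a subgroup
is the number of orbits of that subgroup. -/
lemma finrank_iInf_invariants {k : ℕ} (s : Set (Equiv.Perm (Fin k))) :
    finrank ℚ (⨅ g ∈ s, invariants g : Submodule ℚ (Fin k → ℚ)) =
      Nat.card (MulAction.orbitRel.Quotient (Subgroup.closure s) (Fin k)) := by
  classical
  let q : Fin k → MulAction.orbitRel.Quotient (Subgroup.closure s) (Fin k) := Quotient.mk _
  have hq : Function.Surjective q := Quotient.mk_surjective
  have hfin : Finite (MulAction.orbitRel.Quotient (Subgroup.closure s) (Fin k)) :=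
    Finite.of_surjective q hq
  have := Fintype.ofFinite (MulAction.orbitRel.Quotient (Subgroup.closure s) (Fin k))
  have hrange : (⨅ g ∈ s, invariants g) = LinearMap.range (LinearMap.funLeft ℚ ℚ q) := by
    ext f
    simp only [Submodule.mem_iInf, mem_invariants, LinearMap.mem_range]
    constructor
    · intro hf
      have hle : Subgroup.closure s ≤ stabilizerOf f :=
        (Subgroup.closure_le _).2 fun g hg => hf g hg
      refine ⟨fun x => Quotient.lift f (fun a b hab => ?_) x, rfl⟩
      obtain ⟨g, rfl⟩ := MulAction.orbitRel_apply.1 hab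
      exact hle g.2 b
    · rintro ⟨f, rfl⟩ g hg i
      simp only [LinearMap.funLeft_apply]
      congr 1
      exact Quotient.sound
        (MulAction.orbitRel_apply.2 ⟨⟨g, Subgroup.subset_closure hg⟩, rfl⟩)
  rw [hrange, LinearMap.finrank_range_of_inj (LinearMap.funLeft_injective_of_surjective ℚ ℚ q hq),
    Module.finrank_fintype_fun_eq_card, Nat.card_eq_fintype_card]

lemma cycleCount_eq_finrank {k : ℕ} (g : Equiv.Perm (Fin k)) :
    cycleCount g = finrank ℚ (invariants g) := by
  rw [cycleCount, Subgroup.zpowers_eq_closure, ← finrank_iInf_invariants, iInf_singleton]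

lemma finrank_invariants_mul_comm {k : ℕ} (a b : Equiv.Perm (Fin k)) :
    finrank ℚ (invariants (a * b)) = finrank ℚ (invariants (b * a)) := by
  have h (a b : Equiv.Perm (Fin k)) :
      finrank ℚ (invariants (a * b)) ≤ finrank ℚ (invariants (b * a)) := by
    refine LinearMap.finrank_le_finrank_of_injective
      (f := (LinearMap.funLeft ℚ ℚ a).restrict
        (p := invariants (a * b)) (q := invariants (b * a)) ?_) ?_
    · intro f hf
      rw [mem_invariants] at hf ⊢
      intro i
      exact hf (a i)
    · rintro ⟨f, _⟩ ⟨f', _⟩ h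
      exact Subtype.ext (LinearMap.funLeft_injective_of_surjective ℚ ℚ a a.surjective
        (congrArg Subtype.val h))
  exact le_antisymm (h a b) (h b a)

/-- The images of `g ↦ g ∘ a - g` and `g ↦ g ∘ b - g` together have codimension at most the
dimension of the space of common invariants. -/
lemma le_finrank_range_sup {k : ℕ} (a b : Equiv.Perm (Fin k)) :
    k ≤ finrank ℚ ↥(LinearMap.range (LinearMap.funLeft ℚ ℚ a - LinearMap.id) ⊔
        LinearMap.range (LinearMap.funLeft ℚ ℚ b - LinearMap.id)) +
      finrank ℚ ↥(invariants a ⊓ invariants b) := by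
  set W := LinearMap.range (LinearMap.funLeft ℚ ℚ a - LinearMap.id) ⊔
    LinearMap.range (LinearMap.funLeft ℚ ℚ b - LinearMap.id)
  have hann := Subspace.finrank_add_finrank_dualAnnihilator_eq W
  rw [Module.finrank_fin_fun] at hann
  let ψ : Dual ℚ (Fin k → ℚ) →ₗ[ℚ] (Fin k → ℚ) :=
    LinearMap.pi fun i => Dual.eval ℚ _ (Pi.single i 1)
  have hinv (c : Equiv.Perm (Fin k)) (φ : Dual ℚ (Fin k → ℚ))
      (hφ : ∀ f : Fin k → ℚ, φ ((LinearMap.funLeft ℚ ℚ c - LinearMap.id : _ →ₗ[ℚ] _) f) = 0) :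
      ψ φ ∈ invariants c := by
    rw [mem_invariants]
    intro i
    have h := hφ (Pi.single (c i) 1)
    have hs : LinearMap.funLeft ℚ ℚ c (Pi.single (c i) 1) = Pi.single i 1 := by
      ext j
      simp [LinearMap.funLeft_apply, Pi.single_apply]
    rw [LinearMap.sub_apply, hs, map_sub, sub_eq_zero] at h
    exact h.symm
  have hle : finrank ℚ W.dualAnnihilator ≤ finrank ℚ ↥(invariants a ⊓ invariants b) := by
    refine LinearMap.finrank_le_finrank_of_injective
      (f := ψ.restrict (p := W.dualAnnihilator) (q := invariants a ⊓ invariants b) ?_) ?_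
    · intro φ hφ
      rw [Submodule.mem_dualAnnihilator] at hφ
      exact ⟨hinv a φ fun f => hφ _ (Submodule.mem_sup_left ⟨f, rfl⟩),
        hinv b φ fun f => hφ _ (Submodule.mem_sup_right ⟨f, rfl⟩)⟩
    · rintro ⟨φ, _⟩ ⟨φ', _⟩ h
      refine Subtype.ext (LinearMap.pi_ext' fun i => LinearMap.ext_ring ?_)
      exact congrFun (congrArg Subtype.val h) i
  omega

/-- Nonnegativity of the genus of the three-colored graph given by `1`, `a` and `b`. -/
lemma genus_inequality {k : ℕ} (a b : Equiv.Perm (Fin k)) :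
    finrank ℚ (invariants a) + finrank ℚ (invariants b) + finrank ℚ (invariants (a * b⁻¹)) ≤
      k + 2 * finrank ℚ ↥(invariants a ⊓ invariants b) := by
  set X := LinearMap.funLeft ℚ ℚ a - LinearMap.id with hX
  set Y := LinearMap.funLeft ℚ ℚ b - LinearMap.id with hY
  have hXrank := LinearMap.finrank_range_add_finrank_ker X
  have hYrank := LinearMap.finrank_range_add_finrank_ker Y
  rw [Module.finrank_fin_fun] at hXrank hYrank
  have hsup := Submodule.finrank_sup_add_finrank_inf_eq (LinearMap.range X) (LinearMap.range Y)
  have hW := le_finrank_range_sup a b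
  rw [← hX, ← hY] at hW
  have hXY {f : Fin k → ℚ} (hf : f ∈ invariants (b⁻¹ * a)) :
      X (f ∘ ⇑b⁻¹) = Y (f ∘ ⇑b⁻¹) := by
    rw [mem_invariants] at hf
    ext i
    have := hf i
    simp only [Equiv.Perm.mul_apply] at this
    simpa [hX, hY, LinearMap.funLeft_apply] using this
  let Φ : invariants (b⁻¹ * a) →ₗ[ℚ] ↥(LinearMap.range X ⊓ LinearMap.range Y) :=
    LinearMap.codRestrict _ (X ∘ₗ LinearMap.funLeft ℚ ℚ ⇑b⁻¹ ∘ₗ Submodule.subtype _)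
      fun f => ⟨⟨_, rfl⟩, ⟨_, (hXY f.2).symm⟩⟩
  have hΦrank := LinearMap.finrank_range_add_finrank_ker Φ
  have hΦrange := Submodule.finrank_le (LinearMap.range Φ)
  have hΦker : finrank ℚ (LinearMap.ker Φ) ≤ finrank ℚ ↥(invariants a ⊓ invariants b) := by
    refine LinearMap.finrank_le_finrank_of_injective
      (f := LinearMap.codRestrict (invariants a ⊓ invariants b)
        (LinearMap.funLeft ℚ ℚ ⇑b⁻¹ ∘ₗ Submodule.subtype _ ∘ₗ Submodule.subtype _) ?_) ?_
    · rintro ⟨⟨f, hf⟩, hker⟩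
      have h0 : X (f ∘ ⇑b⁻¹) = 0 := congrArg Subtype.val hker
      exact ⟨h0, (hXY hf).symm.trans h0⟩
    · rintro ⟨⟨f, _⟩, _⟩ ⟨⟨f', _⟩, _⟩ h
      exact Subtype.ext (Subtype.ext (LinearMap.funLeft_injective_of_surjective ℚ ℚ ⇑b⁻¹
        b⁻¹.surjective (congrArg Subtype.val h)))
  rw [finrank_invariants_mul_comm a]
  change finrank ℚ (LinearMap.ker X) + finrank ℚ (LinearMap.ker Y) + _ ≤ _
  omega

/-- Intersecting with a fixed subspace lowers the dimension of a larger subspace at least as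
much as that of a smaller one. -/
lemma finrank_inf_submodular {K V : Type*} [Field K] [AddCommGroup V] [Module K V]
    [FiniteDimensional K V] {P Q : Submodule K V} (h : P ≤ Q) (E : Submodule K V) :
    finrank K P + finrank K ↥(Q ⊓ E) ≤ finrank K Q + finrank K ↥(P ⊓ E) := by
  have hP := Submodule.finrank_sup_add_finrank_inf_eq P E
  have hQ := Submodule.finrank_sup_add_finrank_inf_eq Q E
  have := Submodule.finrank_mono (sup_le_sup_right h E)
  omega

/-- Bound on the number of faces of a colored graph that contain a given color, in terms of the
numbers of components with and without that color; here one of the other colors is `1`, the given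
color is `a`, and the remaining ones are `b c` for `c ∈ s`. -/
lemma sum_finrank_invariants_le {k : ℕ} {ι : Type*} (a : Equiv.Perm (Fin k))
    (b : ι → Equiv.Perm (Fin k)) (s : Finset ι) :
    (finrank ℚ (invariants a) : ℤ) + ∑ c ∈ s, (finrank ℚ (invariants (a * (b c)⁻¹)) : ℤ) ≤
      s.card * (k - finrank ℚ ↥(⨅ c ∈ s, invariants (b c))) +
        (s.card + 1) * finrank ℚ ↥(invariants a ⊓ ⨅ c ∈ s, invariants (b c)) := by
  classical
  induction s using Finset.induction_on with
  | empty =>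
    have h : (⨅ c ∈ (∅ : Finset ι), invariants (b c)) = ⊤ := by simp
    rw [h, inf_top_eq]
    simp
  | insert c s hc ih =>
    rw [Finset.sum_insert hc, Finset.card_insert_of_notMem hc, Finset.iInf_insert]
    set J := ⨅ c ∈ s, invariants (b c)
    set U := invariants a
    set E := invariants (b c)
    have hgenus : finrank ℚ U + finrank ℚ E + finrank ℚ (invariants (a * (b c)⁻¹)) ≤
      k + 2 * finrank ℚ ↥(U ⊓ E) := genus_inequality a (b c)
    have hE := finrank_inf_submodular (inf_le_right : U ⊓ E ≤ E) J
    have hU := finrank_inf_submodular (inf_le_left : U ⊓ E ≤ U) J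
    have hJ := finrank_inf_submodular (inf_le_right : U ⊓ J ≤ J) E
    rw [inf_right_comm, inf_comm J E] at hJ
    rw [← inf_assoc]
    push_cast
    zify at hgenus hE hU hJ
    have hmul := mul_le_mul_of_nonneg_left hJ (Int.natCast_nonneg s.card)
    linarith

lemma faceCount_eq_bubbleFaceCount_add {k D : ℕ} (σ : Fin (D + 1) → Equiv.Perm (Fin k)) :
    faceCount σ = bubbleFaceCount σ +
      ∑ c ∈ Finset.univ.filter (fun c : Fin (D + 1) => 0 < c), cycleCount (σ 0 * (σ c)⁻¹) := by
  rw [faceCount, bubbleFaceCount, ← Finset.sum_filter_add_sum_filter_not _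
    (fun p : Fin (D + 1) × Fin (D + 1) => 0 < p.1), Finset.filter_filter, Finset.filter_filter]
  congr 1
  · exact Finset.sum_congr (Finset.filter_congr fun p _ => and_comm) fun _ _ => rfl
  · symm
    refine Finset.sum_bij (fun c _ => ((0 : Fin (D + 1)), c)) ?_ ?_ ?_ ?_
    · simp
    · simp
    · rintro ⟨x, y⟩ h
      simp only [Finset.mem_filter, Finset.mem_univ, true_and, not_lt, Fin.le_zero_iff] at h
      obtain ⟨h, rfl⟩ := h
      exact ⟨y, by simpa using h, rfl⟩
    · simp

/-- Annealed terms with disconnected bubbles are suppressed: if the `(D+1)`-colored graph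
is connected but its `D`-bubble is disconnected, the `N`-exponent satisfies
`−(D−1)·k + F(σ) − F_D(σ_D) ≤ 2 − D`, i.e. such terms are suppressed by at least
`N^{−(D−1)}` relative to the leading scaling `N`. -/
theorem annealed_suppression (k D : ℕ) (hk : 1 ≤ k) (hD : 2 ≤ D)
    (σ : Fin (D + 1) → Equiv.Perm (Fin k)) (hconn : compCount σ = 1)
    (hdisc : 2 ≤ bubbleCompCount σ) :
    -(D - 1 : ℤ) * k + (faceCount σ : ℤ) - (bubbleFaceCount σ : ℤ) ≤ 2 - D := by
  obtain ⟨n, rfl⟩ : ∃ n, D = n + 1 := ⟨D - 1, by omega⟩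
  set s : Finset (Fin (n + 1 + 1)) := Finset.Ioi 1 with hs
  have hcard : s.card = n := by simp [hs]
  have hpos : Finset.univ.filter (fun c : Fin (n + 1 + 1) => 0 < c) = insert 1 s := by
    ext c
    simp only [hs, Finset.mem_filter, Finset.mem_univ, true_and, Finset.mem_insert,
      Finset.mem_Ioi, Fin.lt_def, Fin.ext_iff, Fin.val_zero, Fin.val_one]
    omega
  have hsum := sum_finrank_invariants_le ((σ 1)⁻¹ * σ 0) (fun c => (σ 1)⁻¹ * σ c) s
  set J := ⨅ c ∈ s, invariants ((σ 1)⁻¹ * σ c) with hJ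
  have hface (c : Fin (n + 1 + 1)) : cycleCount (σ 0 * (σ c)⁻¹) =
      finrank ℚ (invariants ((σ 1)⁻¹ * σ 0 * ((σ 1)⁻¹ * σ c)⁻¹)) := by
    rw [cycleCount_eq_finrank, mul_assoc, finrank_invariants_mul_comm (σ 1)⁻¹]
    congr 3
    group
  have hface_one : cycleCount (σ 0 * (σ 1)⁻¹) = finrank ℚ (invariants ((σ 1)⁻¹ * σ 0)) := by
    rw [cycleCount_eq_finrank, finrank_invariants_mul_comm]
  have hJrank : 2 ≤ finrank ℚ J := by
    rw [bubbleCompCount, ← finrank_iInf_invariants] at hdisc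
    refine hdisc.trans (Submodule.finrank_mono (le_iInf₂ fun c hc => ?_))
    exact iInf₂_le _ ⟨c, Finset.mem_Ioi.1 hc, rfl⟩
  have hUJrank : finrank ℚ ↥(invariants ((σ 1)⁻¹ * σ 0) ⊓ J) ≤ 1 := by
    rw [compCount, ← finrank_iInf_invariants] at hconn
    refine (Submodule.finrank_mono (le_iInf₂ ?_)).trans hconn.le
    rintro _ ⟨c, hc, rfl⟩ f ⟨hf0, hfJ⟩
    have hzero : (σ 1)⁻¹ * σ 0 ∈ stabilizerOf f := mem_invariants.1 hf0
    have hc' : c ∈ insert 1 s := by rw [← hpos]; simpa using Fin.pos_iff_ne_zero.2 hc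
    have hmem : (σ 1)⁻¹ * σ c ∈ stabilizerOf f := by
      rcases Finset.mem_insert.1 hc' with rfl | hcs
      · simp
      · simp only [hJ, SetLike.mem_coe, Submodule.mem_iInf] at hfJ
        exact mem_invariants.1 (hfJ c hcs)
    have h := mul_mem (inv_mem hzero) hmem
    rw [mul_inv_rev, inv_inv, mul_assoc, mul_inv_cancel_left] at h
    exact mem_invariants.2 h
  rw [faceCount_eq_bubbleFaceCount_add, hpos, Finset.sum_insert (by simp [hs]), hface_one]
  simp only [hface]
  rw [hcard] at hsum
  push_cast
  zify at hJrank hUJrank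
  have h₁ := mul_le_mul_of_nonneg_left hJrank (Int.natCast_nonneg n)
  have h₂ := mul_le_mul_of_nonneg_left hUJrank (Int.natCast_nonneg (n + 1))
  push_cast at h₂
  linarith
end

section
/- Counting the leading-order graphs for D = 2: let k ≥ 1 and let γ = (1 2 … k) be the standard k-cycle in S_k. Then the number of permutations σ ∈ S_k satisfying c(σ) + c(σ ∘ γ⁻¹) = k + 1 (the planarity/genus-zero condition for the associated 3-colored graph with a single face of colors 1 and 2) equals (1/(2k+1))·binomial(2k+1, k), i.e. the k-th Catalan number. -/
open Equiv

/-- The space of rational-valued functions invariant under a permutation. -/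
def fixedFunctions {α : Type*} (τ : Perm α) : Submodule ℚ (α → ℚ) where
  carrier := {f | ∀ a, f (τ a) = f a}
  add_mem' hf hg a := by simp [hf a, hg a]
  zero_mem' _ := rfl
  smul_mem' c f hf a := by simp [hf a]

/-- The dimension of the space of invariant functions, which is the number of cycles. -/
noncomputable def fixedRank {α : Type*} (τ : Perm α) : ℕ :=
  Module.finrank ℚ (fixedFunctions τ)

theorem cycleCount_eq_fixedRank {k : ℕ} (τ : Perm (Fin k)) : cycleCount τ = fixedRank τ := by
  classical
  let Q := MulAction.orbitRel.Quotient (Subgroup.zpowers τ) (Fin k)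
  let p : Fin k → Q := Quotient.mk _
  have hp : Function.Surjective p := Quotient.mk_surjective
  have hrange : LinearMap.range (LinearMap.funLeft ℚ ℚ p) = fixedFunctions τ := by
    ext f
    constructor
    · rintro ⟨g, rfl⟩ a
      have : p (τ a) = p a := Quotient.sound ⟨⟨τ, Subgroup.mem_zpowers τ⟩, rfl⟩
      simp [LinearMap.funLeft_apply, this]
    · intro hf
      have hz : ∀ (n : ℤ) a, f ((τ ^ n) a) = f a := by
        intro n
        induction n with
        | zero => simp
        | succ n ih => intro a; rw [zpow_add_one, Perm.mul_apply, ih, hf]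
        | pred n ih =>
          intro a
          rw [zpow_sub_one, Perm.mul_apply, ih]
          simpa using (hf (τ⁻¹ a)).symm
      refine ⟨fun q => Quotient.lift f ?_ q, rfl⟩
      rintro a b ⟨⟨_, n, rfl⟩, rfl⟩
      exact hz n b
  have : Fintype Q := Fintype.ofFinite Q
  rw [fixedRank, ← hrange, LinearMap.finrank_range_of_inj
    (LinearMap.funLeft_injective_of_surjective ℚ ℚ p hp), Module.finrank_fintype_fun_eq_card,
    cycleCount, Nat.card_eq_fintype_card]

theorem fixedFunctions_inv {α : Type*} (τ : Perm α) :
    fixedFunctions τ⁻¹ = fixedFunctions τ := by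
  ext f
  constructor
  · intro h a
    simpa using (h (τ a)).symm
  · intro h a
    simpa using (h (τ⁻¹ a)).symm

theorem fixedRank_inv {α : Type*} (τ : Perm α) : fixedRank τ⁻¹ = fixedRank τ := by
  rw [fixedRank, fixedFunctions_inv, fixedRank]

theorem fixedRank_permCongr {α β : Type*} (e : α ≃ β) (τ : Perm α) :
    fixedRank (e.permCongr τ) = fixedRank τ := by
  refine LinearEquiv.finrank_eq ((LinearEquiv.funCongrLeft ℚ ℚ e).ofSubmodules _ _ ?_)
  ext f
  simp only [Submodule.mem_map, LinearEquiv.coe_coe]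
  constructor
  · rintro ⟨g, hg, rfl⟩ a
    simpa using hg (e a)
  · intro hf
    refine ⟨f ∘ e.symm, fun b => ?_, ?_⟩
    · simpa using hf (e.symm b)
    · ext a
      simp [LinearEquiv.funCongrLeft_apply, LinearMap.funLeft_apply]

theorem fixedRank_conj {α : Type*} (s τ : Perm α) : fixedRank (s * τ * s⁻¹) = fixedRank τ :=
  fixedRank_permCongr s τ

theorem fixedRank_sumCongr {α β : Type*} [Finite α] [Finite β] (σ : Perm α) (τ : Perm β) :
    fixedRank (Perm.sumCongr σ τ) = fixedRank σ + fixedRank τ := by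
  let e : fixedFunctions (Perm.sumCongr σ τ) ≃ₗ[ℚ] fixedFunctions σ × fixedFunctions τ :=
    { toFun := fun f => (⟨fun a => f.1 (Sum.inl a), fun a => f.2 (Sum.inl a)⟩,
        ⟨fun b => f.1 (Sum.inr b), fun b => f.2 (Sum.inr b)⟩)
      invFun := fun p => ⟨Sum.elim p.1.1 p.2.1, by
        rintro (a | b)
        · exact p.1.2 a
        · exact p.2.2 b⟩
      map_add' := fun _ _ => rfl
      map_smul' := fun _ _ => rfl
      left_inv := fun f => Subtype.ext (Sum.elim_comp_inl_inr f.1)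
      right_inv := fun _ => rfl }
  rw [fixedRank, e.finrank_eq, Module.finrank_prod, fixedRank, fixedRank]

theorem fixedFunctions_inf_le {α : Type*} (γ σ : Perm α) :
    fixedFunctions σ ⊓ fixedFunctions (σ * γ⁻¹) ≤ fixedFunctions γ := by
  rintro f ⟨h₁, h₂⟩ a
  have h : f (σ a) = f (γ a) := by simpa using h₂ (γ a)
  rw [← h, h₁]

theorem fixedRank_add_le_inf {α : Type*} [Finite α] (σ τ : Perm α) :
    fixedRank σ + fixedRank τ ≤
      Nat.card α + Module.finrank ℚ (fixedFunctions σ ⊓ fixedFunctions τ : Submodule _ _) := by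
  have := Fintype.ofFinite α
  rw [fixedRank, fixedRank, ← Submodule.finrank_sup_add_finrank_inf_eq, Nat.card_eq_fintype_card,
    ← Module.finrank_fintype_fun_eq_card ℚ]
  gcongr
  exact Submodule.finrank_le _

theorem fixedRank_add_le {α : Type*} [Finite α] (γ σ : Perm α) :
    fixedRank σ + fixedRank (σ * γ⁻¹) ≤ Nat.card α + fixedRank γ :=
  (fixedRank_add_le_inf _ _).trans
    (Nat.add_le_add_left (Submodule.finrank_mono (fixedFunctions_inf_le γ σ)) _)

/-- The permutation `σ` lies on a geodesic from `1` to `γ` for the word length in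
transpositions. -/
def IsGeodesic {α : Type*} (γ σ : Perm α) : Prop :=
  fixedRank σ + fixedRank (σ * γ⁻¹) = Nat.card α + fixedRank γ

theorem IsGeodesic.fixedFunctions_le {α : Type*} [Finite α] {γ σ : Perm α}
    (h : IsGeodesic γ σ) : fixedFunctions γ ≤ fixedFunctions σ := by
  have hle := fixedRank_add_le_inf σ (σ * γ⁻¹)
  rw [h] at hle
  rw [← Submodule.eq_of_le_of_finrank_le (fixedFunctions_inf_le γ σ) (Nat.le_of_add_le_add_left hle)]
  exact inf_le_left

theorem isGeodesic_permCongr {α β : Type*} (e : α ≃ β) (γ σ : Perm α) :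
    IsGeodesic (e.permCongr γ) (e.permCongr σ) ↔ IsGeodesic γ σ := by
  have h : e.permCongr σ * (e.permCongr γ)⁻¹ = e.permCongr (σ * γ⁻¹) := by
    ext; simp [Perm.inv_def, Equiv.permCongr_def]
  rw [IsGeodesic, IsGeodesic, h, fixedRank_permCongr, fixedRank_permCongr, fixedRank_permCongr,
    Nat.card_congr e]

/-- The Kreweras complement preserves geodesics. -/
theorem isGeodesic_mul_inv {α : Type*} (γ σ : Perm α) :
    IsGeodesic γ (γ * σ⁻¹) ↔ IsGeodesic γ σ := by
  rw [IsGeodesic, IsGeodesic, fixedRank_conj, fixedRank_inv, ← fixedRank_inv (γ * σ⁻¹), mul_inv_rev,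
    inv_inv, add_comm]

theorem isGeodesic_sumCongr {α β : Type*} [Finite α] [Finite β] (γ₁ σ₁ : Perm α)
    (γ₂ σ₂ : Perm β) :
    IsGeodesic (Perm.sumCongr γ₁ γ₂) (Perm.sumCongr σ₁ σ₂) ↔
      IsGeodesic γ₁ σ₁ ∧ IsGeodesic γ₂ σ₂ := by
  have h₁ := fixedRank_add_le γ₁ σ₁
  have h₂ := fixedRank_add_le γ₂ σ₂
  simp only [IsGeodesic, Perm.sumCongr_inv, Perm.sumCongr_mul, fixedRank_sumCongr, Nat.card_sum]
  omega

theorem IsGeodesic.exists_sumCongr {α β : Type*} [Finite α] [Finite β] {γ₁ : Perm α}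
    {γ₂ : Perm β} {σ : Perm (α ⊕ β)} (h : IsGeodesic (Perm.sumCongr γ₁ γ₂) σ) :
    ∃ σ₁ σ₂, σ = Perm.sumCongr σ₁ σ₂ := by
  have hf : Sum.elim (fun _ => 1) (fun _ => 0) ∈ fixedFunctions σ := by
    apply h.fixedFunctions_le
    rintro (a | b) <;> simp
  have hmaps : Set.MapsTo σ (Set.range Sum.inl) (Set.range Sum.inl) := by
    rintro _ ⟨a, rfl⟩
    have := hf (Sum.inl a)
    cases hσ : σ (Sum.inl a) with
    | inl b => exact ⟨b, rfl⟩
    | inr b => simp [hσ] at this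
  obtain ⟨⟨σ₁, σ₂⟩, rfl⟩ := Perm.mem_sumCongrHom_range_of_perm_mapsTo_inl hmaps
  exact ⟨σ₁, σ₂, rfl⟩

/-- Splitting off a fixed point increases the number of cycles by one. -/
theorem fixedRank_swap_mul {α : Type*} [Finite α] [DecidableEq α] {σ : Perm α} {x y : α}
    (hxy : x ≠ y) (hσ : σ x = y) : fixedRank (swap x y * σ) = fixedRank σ + 1 := by
  have hle : fixedFunctions σ ≤ fixedFunctions (swap x y * σ) := by
    intro f hf a
    have hxy' : f x = f y := by rw [← hσ, hf]
    rw [Perm.mul_apply, ← hf a, swap_apply_def]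
    split_ifs with h₁ h₂
    · rw [h₁, hxy']
    · rw [h₂, hxy']
    · rfl
  have hlt : fixedFunctions σ < fixedFunctions (swap x y * σ) := by
    refine lt_of_le_of_ne hle fun he => ?_
    have hmem : Pi.single x 1 ∈ fixedFunctions (swap x y * σ) := by
      intro a
      have hx : (swap x y * σ) x = x := by simp [hσ]
      by_cases ha : a = x
      · rw [ha, hx]
      · rw [Pi.single_eq_of_ne ha, Pi.single_eq_of_ne]
        exact fun h => ha ((swap x y * σ).injective (h.trans hx.symm))
    rw [← he] at hmem
    have := hmem x
    rw [hσ, Pi.single_eq_same, Pi.single_eq_of_ne hxy.symm] at this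
    exact zero_ne_one this
  have hlt' : fixedRank σ < fixedRank (swap x y * σ) := Submodule.finrank_lt_finrank_of_lt hlt
  let φ : (α → ℚ) →ₗ[ℚ] ℚ := LinearMap.proj (R := ℚ) (φ := fun _ : α => ℚ) x - LinearMap.proj y
  have hinf : fixedFunctions (swap x y * σ) ⊓ LinearMap.ker φ ≤ fixedFunctions σ := by
    rintro f ⟨hf, hφ⟩ a
    have hxy' : f x = f y := sub_eq_zero.1 hφ
    rw [← hf a, Perm.mul_apply, swap_apply_def]
    split_ifs with h₁ h₂
    · rw [h₁, hxy']
    · rw [h₂, hxy']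
    · rfl
  have h₁ : Module.finrank ℚ (fixedFunctions (swap x y * σ) ⊓ LinearMap.ker φ : Submodule _ _) ≤
      fixedRank σ := Submodule.finrank_mono hinf
  have h₂ := Submodule.finrank_sup_add_finrank_inf_eq (fixedFunctions (swap x y * σ))
    (LinearMap.ker φ)
  have h₃ := Submodule.finrank_le (fixedFunctions (swap x y * σ) ⊔ LinearMap.ker φ)
  have h₄ := φ.finrank_range_add_finrank_ker
  have h₅ : Module.finrank ℚ (LinearMap.range φ) ≤ 1 :=
    (Submodule.finrank_le _).trans (Module.finrank_self ℚ).le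
  have h₆ : Module.finrank ℚ (fixedFunctions (swap x y * σ)) = fixedRank (swap x y * σ) := rfl
  omega

theorem isGeodesic_swap_mul {α : Type*} [Finite α] [DecidableEq α] {γ σ : Perm α} {x y : α}
    (hγ : x ≠ y → fixedRank (swap x y * γ) = fixedRank γ + 1) (hσ : σ x = y) :
    IsGeodesic (swap x y * γ) (swap x y * σ) ↔ IsGeodesic γ σ := by
  rcases eq_or_ne x y with rfl | hxy
  · rw [swap_self, ← Perm.one_def, one_mul, one_mul]
  · have h : swap x y * σ * (swap x y * γ)⁻¹ = swap x y * (σ * γ⁻¹) * (swap x y)⁻¹ := by group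
    rw [IsGeodesic, IsGeodesic, h, fixedRank_conj, hγ hxy, fixedRank_swap_mul hxy hσ]
    omega

theorem fixedRank_finRotate_succ (n : ℕ) : fixedRank (finRotate (n + 1)) = 1 := by
  refine finrank_eq_one_iff_of_nonzero' ⟨fun _ => 1, fun _ => rfl⟩ ?_ |>.2 ?_
  · intro h
    exact one_ne_zero (congrFun (congrArg Subtype.val h) 0)
  · rintro ⟨f, hf⟩
    suffices h : ∀ i, f 0 = f i from
      ⟨f 0, Subtype.ext (funext fun i => (mul_one (f 0)).trans (h i))⟩
    intro i
    induction i using Fin.induction with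
    | zero => rfl
    | succ i ih =>
      have := hf i.castSucc
      rw [finRotate_apply, Fin.coeSucc_eq_succ] at this
      rw [this, ← ih]

theorem fixedRank_of_isEmpty {α : Type*} [IsEmpty α] (τ : Perm α) : fixedRank τ = 0 :=
  Module.finrank_zero_of_subsingleton

theorem val_finRotate {n : ℕ} (i : Fin n) :
    (finRotate n i : ℕ) = if (i : ℕ) + 1 = n then 0 else (i : ℕ) + 1 := by
  cases n with
  | zero => exact i.elim0
  | succ n => rw [coe_finRotate]; simp [Fin.ext_iff]

/-- Multiplying a rotation by a transposition cuts it into two rotations. -/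
theorem swap_mul_finRotate {n j m : ℕ} (h : j + 1 + m = n + 1) :
    swap 0 (finRotate (n + 1) ⟨j, by omega⟩) * finRotate (n + 1) =
      (finSumFinEquiv.trans (finCongr h)).permCongr
        (Perm.sumCongr (finRotate (j + 1)) (finRotate m)) := by
  refine Equiv.ext fun z => ?_
  obtain ⟨w, rfl⟩ := (finSumFinEquiv.trans (finCongr h)).surjective z
  apply Fin.ext
  rw [Perm.mul_apply, swap_apply_def, Equiv.permCongr_apply, Equiv.symm_apply_apply]
  rcases w with ⟨a, ha⟩ | ⟨b, hb⟩
  · split_ifs with h₁ h₂ <;>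
      simp only [Fin.ext_iff, val_finRotate, Equiv.trans_apply, finCongr_apply,
        finSumFinEquiv_apply_left, Perm.sumCongr_apply, Sum.map_inl, Fin.val_cast,
        Fin.val_castAdd, Fin.val_zero] at * <;>
      grind
  · split_ifs with h₁ h₂ <;>
      simp only [Fin.ext_iff, val_finRotate, Equiv.trans_apply, finCongr_apply,
        finSumFinEquiv_apply_right, Perm.sumCongr_apply, Sum.map_inr, Fin.val_cast,
        Fin.val_natAdd, Fin.val_zero] at * <;>
      grind

/-- The number of geodesic permutations below the standard `k`-cycle. -/
noncomputable def geodesicCount (k : ℕ) : ℕ :=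
  Nat.card {σ : Perm (Fin k) // IsGeodesic (finRotate k) σ}

/-- The number of geodesic permutations below the standard `(n + 1)`-cycle sending `0` to `y`. -/
noncomputable def geodesicCountAt (n : ℕ) (y : Fin (n + 1)) : ℕ :=
  Nat.card {σ : Perm (Fin (n + 1)) // IsGeodesic (finRotate (n + 1)) σ ∧ σ 0 = y}

theorem card_isGeodesic_sumCongr {α β : Type*} [Finite α] [Finite β] (γ₁ : Perm α) (γ₂ : Perm β)
    (x : α) :
    Nat.card {σ : Perm (α ⊕ β) // IsGeodesic (Perm.sumCongr γ₁ γ₂) σ ∧ σ (Sum.inl x) = Sum.inl x} =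
      Nat.card {σ : Perm α // IsGeodesic γ₁ σ ∧ σ x = x} *
        Nat.card {σ : Perm β // IsGeodesic γ₂ σ} := by
  rw [← Nat.card_prod]
  symm
  refine Nat.card_eq_of_bijective (fun p => ⟨Perm.sumCongr p.1.1 p.2.1,
    (isGeodesic_sumCongr _ _ _ _).2 ⟨p.1.2.1, p.2.2⟩, by simp [p.1.2.2]⟩) ⟨?_, ?_⟩
  · rintro ⟨⟨σ₁, h₁⟩, σ₂, h₂⟩ ⟨⟨τ₁, k₁⟩, τ₂, k₂⟩ h
    have := @Perm.sumCongrHom_injective α β (σ₁, σ₂) (τ₁, τ₂) (congrArg Subtype.val h)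
    simpa using this
  · rintro ⟨σ, hσ, hx⟩
    obtain ⟨σ₁, σ₂, rfl⟩ := hσ.exists_sumCongr
    obtain ⟨h₁, h₂⟩ := (isGeodesic_sumCongr _ _ _ _).1 hσ
    exact ⟨(⟨σ₁, h₁, by simpa using hx⟩, ⟨σ₂, h₂⟩), rfl⟩

theorem geodesicCountAt_finRotate {n j m : ℕ} (h : j + 1 + m = n + 1) :
    geodesicCountAt n (finRotate (n + 1) ⟨j, by omega⟩) =
      geodesicCountAt j 0 * geodesicCount m := by
  rw [geodesicCountAt, geodesicCountAt, geodesicCount, ← card_isGeodesic_sumCongr]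
  have hcut := swap_mul_finRotate h
  set y := finRotate (n + 1) ⟨j, by omega⟩
  set e := finSumFinEquiv.trans (finCongr h) with he
  have he0 : e (Sum.inl 0) = 0 := by ext; simp [he]
  have hrank : 0 ≠ y →
      fixedRank (swap 0 y * finRotate (n + 1)) = fixedRank (finRotate (n + 1)) + 1 := by
    intro hne
    rw [hcut, fixedRank_permCongr, fixedRank_sumCongr, fixedRank_finRotate_succ,
      fixedRank_finRotate_succ]
    cases m with
    | zero =>
      refine absurd ?_ hne
      obtain rfl : j = n := by omega
      exact finRotate_last.symm
    | succ m => rw [fixedRank_finRotate_succ]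
  symm
  refine Nat.card_congr ((e.permCongr.trans (Equiv.mulLeft (swap 0 y))).subtypeEquiv fun σ => ?_)
  have hσ : (swap 0 y * e.permCongr σ) 0 = y ↔ σ (Sum.inl 0) = Sum.inl 0 := by
    rw [Perm.mul_apply, ← Equiv.eq_symm_apply, symm_swap, swap_apply_right,
      Equiv.permCongr_apply, ← Equiv.eq_symm_apply, ← he0, Equiv.symm_apply_apply]
  simp only [Equiv.trans_apply, Equiv.coe_mulLeft]
  rw [hσ, and_congr_left_iff]
  intro hfix
  rw [← isGeodesic_swap_mul hrank (hσ.2 hfix), hcut, ← mul_assoc, swap_mul_self, one_mul,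
    isGeodesic_permCongr]

theorem geodesicCountAt_zero (n : ℕ) : geodesicCountAt n 0 = geodesicCount n := by
  have hK : geodesicCountAt n 0 = geodesicCountAt n (finRotate (n + 1) 0) := by
    refine Nat.card_congr (((Equiv.inv _).trans
      (Equiv.mulLeft (finRotate (n + 1)))).subtypeEquiv fun σ => ?_)
    simp only [Equiv.trans_apply, Equiv.coe_mulLeft, Equiv.inv_apply]
    rw [isGeodesic_mul_inv, Perm.mul_apply, (finRotate (n + 1)).injective.eq_iff,
      Perm.inv_eq_iff_eq, eq_comm (a := (0 : Fin (n + 1)))]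
  have hone : geodesicCountAt 0 0 = 1 := by
    refine Nat.card_eq_one_iff_unique.2 ⟨?_, ⟨1, ?_, rfl⟩⟩
    · exact ⟨fun σ τ => Subtype.ext (Equiv.ext fun i => Subsingleton.elim (α := Fin 1) _ _)⟩
    · have h : finRotate (0 + 1) = 1 := finRotate_one
      rw [IsGeodesic, h, inv_one, mul_one, ← h, fixedRank_finRotate_succ, Nat.card_fin]
  have h := geodesicCountAt_finRotate (n := n) (j := 0) (m := n) (by omega)
  rw [hone, one_mul] at h
  exact hK.trans h

theorem geodesicCount_succ (n : ℕ) :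
    geodesicCount (n + 1) = ∑ i : Fin (n + 1), geodesicCount i * geodesicCount (n - i) := by
  have hsum : geodesicCount (n + 1) = ∑ y, geodesicCountAt n y := by
    simp only [geodesicCount, geodesicCountAt]
    rw [← Nat.card_sigma]
    exact Nat.card_congr
      { toFun := fun σ => ⟨σ.1 0, σ.1, σ.2, rfl⟩
        invFun := fun p => ⟨p.2.1, p.2.2.1⟩
        left_inv := fun _ => rfl
        right_inv := by
          rintro ⟨_, σ, hσ, rfl⟩
          rfl }
  rw [hsum, ← Equiv.sum_comp (finRotate (n + 1))]
  refine Finset.sum_congr rfl fun i _ => ?_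
  rw [← geodesicCountAt_zero i]
  exact geodesicCountAt_finRotate (j := i) (m := n - i) (by omega)

theorem geodesicCount_eq_catalan (n : ℕ) : geodesicCount n = catalan n := by
  induction n using Nat.strong_induction_on with
  | _ n ih =>
    cases n with
    | zero =>
      rw [catalan_zero]
      refine Nat.card_eq_one_iff_unique.2 ⟨inferInstance, ⟨1, ?_⟩⟩
      simp [IsGeodesic, fixedRank_of_isEmpty]
    | succ n =>
      rw [geodesicCount_succ, catalan_succ]
      refine Finset.sum_congr rfl fun i _ => ?_
      rw [ih i (by omega), ih (n - i) (by omega)]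

theorem catalan_eq_choose_div (k : ℕ) :
    catalan k = Nat.choose (2 * k + 1) k / (2 * k + 1) := by
  refine (Nat.div_eq_of_eq_mul_right (Nat.succ_pos _) ?_).symm
  refine Nat.eq_of_mul_eq_mul_right (Nat.succ_pos k) ?_
  have h₁ := Nat.add_one_mul_choose_eq (2 * k) k
  have h₂ := succ_mul_catalan_eq_centralBinom k
  rw [Nat.centralBinom_eq_two_mul_choose] at h₂
  rw [← Nat.choose_symm_half k]
  simp only [Nat.succ_eq_add_one] at h₁ ⊢
  rw [← h₁, ← h₂]
  ring

/-- Counting the leading-order graphs for `D = 2`: with `γ = (1 2 … k)` the standard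
`k`-cycle, the number of permutations `σ` with `c(σ) + c(σ ∘ γ⁻¹) = k + 1`
(the planarity condition) equals `(1/(2k+1))·binomial(2k+1, k)`, the `k`-th
Catalan number. -/
theorem count_leading_order_D2 (k : ℕ) (hk : 1 ≤ k) :
    Nat.card {σ : Equiv.Perm (Fin k) //
        cycleCount σ + cycleCount (σ * (finRotate k)⁻¹) = k + 1} =
      Nat.choose (2 * k + 1) k / (2 * k + 1) := by
  rw [← catalan_eq_choose_div, ← geodesicCount_eq_catalan, geodesicCount]
  obtain ⟨n, rfl⟩ := Nat.exists_eq_succ_of_ne_zero (Nat.one_le_iff_ne_zero.1 hk)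
  refine Nat.card_congr (Equiv.subtypeEquivRight fun σ => ?_)
  rw [cycleCount_eq_fixedRank, cycleCount_eq_fixedRank, IsGeodesic, Nat.card_fin,
    fixedRank_finRotate_succ]
end
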